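/- Gaussian concentration for sets with barycenter at the origin: Let d ≥ 1 and let γ be the standard Gaussian measure on ℝ^d. Let A ⊆ ℝ^d be a measurable set with γ(A) > 0 and ∫_A x dγ(x) = 0. For r > 0, let A_r = {x ∈ ℝ^d : dist(x, A) ≤ r} be the r-enlargement of A. Then 1 − γ(A_r) ≤ γ(A)^{-1} e^{-r²/2}. -/

import Mathlib

open MeasureTheory ENNReal
open scoped RealInnerProductSpace


/-- The standard Gaussian measure on `ℝ^d`. -/
noncomputable def stdGaussian (d : ℕ) : Measure (EuclideanSpace ℝ (Fin d)) :=
  volume.withDensity fun x =>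
    ENNReal.ofReal ((2 * Real.pi) ^ (-(d : ℝ) / 2) * Real.exp (-‖x‖ ^ 2 / 2))

/-- One-dimensional Brunn–Minkowski inequality for compact sets. -/
theorem volume_add_le_of_isCompact {K L T : Set ℝ} (hK : IsCompact K) (hL : IsCompact L)
    (hK0 : K.Nonempty) (hL0 : L.Nonempty) (h : ∀ a ∈ K, ∀ b ∈ L, a + b ∈ T) :
    volume K + volume L ≤ volume T := by
  obtain ⟨a, haK, ha⟩ := hK.exists_isGreatest hK0
  obtain ⟨b, hbL, hb⟩ := hL.exists_isLeast hL0
  have h1 : volume ((fun x => x - b) ⁻¹' K) = volume K := by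
    simp [sub_eq_add_neg]
  have h2 : volume ((fun x => x - a) ⁻¹' L) = volume L := by
    simp [sub_eq_add_neg]
  have hm : MeasurableSet ((fun x => x - a) ⁻¹' L) :=
    (measurable_id.sub_const a) hL.measurableSet
  have hd : AEDisjoint volume ((fun x => x - b) ⁻¹' K) ((fun x => x - a) ⁻¹' L) := by
    refine measure_mono_null (t := {a + b}) ?_ (by simp)
    rintro x ⟨hx1, hx2⟩
    have h3 := ha hx1
    have h4 := hb hx2
    simp only [Set.mem_singleton_iff]
    linarith
  rw [← h1, ← h2, ← measure_union₀ hm.nullMeasurableSet hd]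
  refine measure_mono ?_
  rintro x (hx | hx)
  · simpa using h _ hx b hbL
  · simpa using h a haK _ hx

/-- One-dimensional Brunn–Minkowski inequality for measurable sets. -/
theorem volume_add_le_of_measurableSet {A B T : Set ℝ} (hA : MeasurableSet A)
    (hB : MeasurableSet B) (hA0 : A.Nonempty) (hB0 : B.Nonempty)
    (h : ∀ a ∈ A, ∀ b ∈ B, a + b ∈ T) : volume A + volume B ≤ volume T := by
  obtain ⟨a, ha⟩ := hA0
  obtain ⟨b, hb⟩ := hB0
  rw [hA.measure_eq_iSup_isCompact, hB.measure_eq_iSup_isCompact]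
  simp_rw [iSup_and']
  refine ENNReal.biSup_add_biSup_le' ⟨∅, by simp⟩ ⟨∅, by simp⟩ ?_
  rintro K ⟨hKA, hK⟩ L ⟨hLB, hL⟩
  have hK' : insert a K ⊆ A := Set.insert_subset ha hKA
  have hL' : insert b L ⊆ B := Set.insert_subset hb hLB
  calc volume K + volume L ≤ volume (insert a K) + volume (insert b L) := by
        gcongr <;> exact Set.subset_insert _ _
    _ ≤ volume T := volume_add_le_of_isCompact (hK.insert a) (hL.insert b)
        (Set.insert_nonempty _ _) (Set.insert_nonempty _ _)
        fun x hx y hy => h x (hK' hx) y (hL' hy)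

theorem lintegral_comp_half (h : ℝ → ℝ≥0∞) :
    ∫⁻ w, h (w / 2) = 2 * ∫⁻ w, h w := by
  have := lintegral_image_eq_lintegral_abs_deriv_mul (s := Set.univ) (f := fun x : ℝ => 2 * x)
    (f' := fun _ => 2) MeasurableSet.univ
    (fun x _ => (hasDerivAt_const_mul (2 : ℝ)).hasDerivWithinAt)
    (fun x _ y _ hxy => by simpa using hxy) (fun w => h (w / 2))
  have hs : (fun x : ℝ => 2 * x) '' Set.univ = Set.univ := by
    rw [Set.image_univ]
    exact Set.range_eq_univ.2 fun y => ⟨y / 2, by ring⟩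
  rw [hs] at this
  simp only [Measure.restrict_univ] at this
  rw [this, lintegral_const_mul' _ _ (by simp)]
  simp

/-- One-dimensional Prékopa–Leindler inequality, additive form, for functions of supremum one. -/
theorem lintegral_add_le_of_sup_eq_one {F G h : ℝ → ℝ} (hF : Measurable F) (hG : Measurable G)
    (hh : Measurable h) (hF0 : ∀ x, 0 ≤ F x) (hG0 : ∀ x, 0 ≤ G x) (hh0 : ∀ x, 0 ≤ h x)
    (hF1 : ∀ x, F x ≤ 1) (hG1 : ∀ x, G x ≤ 1) (hF2 : ∀ t < 1, ∃ x, t < F x)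
    (hG2 : ∀ t < 1, ∃ x, t < G x) (H : ∀ u v, F u * G v ≤ h ((u + v) / 2) ^ 2) :
    (∫⁻ x, ENNReal.ofReal (F x)) + ∫⁻ x, ENNReal.ofReal (G x) ≤
      2 * ∫⁻ x, ENNReal.ofReal (h x) := by
  rw [← lintegral_comp_half (fun x => ENNReal.ofReal (h x)),
    lintegral_eq_lintegral_meas_lt volume (.of_forall hF0) hF.aemeasurable,
    lintegral_eq_lintegral_meas_lt volume (.of_forall hG0) hG.aemeasurable,
    lintegral_eq_lintegral_meas_lt volume (.of_forall fun x => hh0 (x / 2))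
      (hh.comp (measurable_id.div_const 2)).aemeasurable]
  refine (le_lintegral_add _ _).trans (setLIntegral_mono' measurableSet_Ioi fun t ht => ?_)
  rw [Set.mem_Ioi] at ht
  rcases lt_or_ge t 1 with ht1 | ht1
  · refine volume_add_le_of_measurableSet (measurableSet_lt measurable_const hF)
      (measurableSet_lt measurable_const hG) (hF2 t ht1) (hG2 t ht1) fun a ha b hb => ?_
    have ha' : t < F a := ha
    have hb' : t < G b := hb
    change t < h ((a + b) / 2)
    refine lt_of_pow_lt_pow_left₀ 2 (hh0 _) (lt_of_lt_of_le ?_ (H a b))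
    nlinarith
  · have e1 : {x | t < F x} = ∅ := by
      ext x; simpa using (hF1 x).trans ht1
    have e2 : {x | t < G x} = ∅ := by
      ext x; simpa using (hG1 x).trans ht1
    simp [e1, e2]

theorem ENNReal.mul_le_sq_of_add_le_two_mul {x y z : ℝ≥0∞} (h : x + y ≤ 2 * z) :
    x * y ≤ z ^ 2 := by
  rcases eq_or_ne z ∞ with rfl | hz
  · simp
  have hxy : x + y ≠ ∞ := ne_top_of_le_ne_top (by finiteness) h
  rw [ENNReal.add_ne_top] at hxy
  lift x to NNReal using hxy.1
  lift y to NNReal using hxy.2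
  lift z to NNReal using hz
  norm_cast at h ⊢
  have h' : (x : ℝ) + y ≤ 2 * z := by exact_mod_cast h
  have : (x : ℝ) * y ≤ z ^ 2 := by
    nlinarith [sq_nonneg ((x : ℝ) - y), x.coe_nonneg, y.coe_nonneg, z.coe_nonneg]
  exact_mod_cast this

/-- One-dimensional Prékopa–Leindler inequality for bounded functions. -/
theorem prekopa_leindler_of_bddAbove {F G h : ℝ → ℝ} (hF : Measurable F) (hG : Measurable G)
    (hh : Measurable h) (hF0 : ∀ x, 0 ≤ F x) (hG0 : ∀ x, 0 ≤ G x) (hh0 : ∀ x, 0 ≤ h x)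
    (hFb : BddAbove (Set.range F)) (hGb : BddAbove (Set.range G))
    (H : ∀ u v, F u * G v ≤ h ((u + v) / 2) ^ 2) :
    (∫⁻ x, ENNReal.ofReal (F x)) * ∫⁻ x, ENNReal.ofReal (G x) ≤
      (∫⁻ x, ENNReal.ofReal (h x)) ^ 2 := by
  by_cases hFz : ∀ x, F x = 0
  · simp [hFz]
  by_cases hGz : ∀ x, G x = 0
  · simp [hGz]
  push Not at hFz hGz
  obtain ⟨x₀, hx₀⟩ := hFz
  obtain ⟨y₀, hy₀⟩ := hGz
  set a := ⨆ x, F x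
  set b := ⨆ x, G x
  have ha : 0 < a := ((hF0 x₀).lt_of_ne' hx₀).trans_le (le_ciSup hFb x₀)
  have hb : 0 < b := ((hG0 y₀).lt_of_ne' hy₀).trans_le (le_ciSup hGb y₀)
  have hc : 0 < √(a * b) := Real.sqrt_pos.2 (mul_pos ha hb)
  have key := ENNReal.mul_le_sq_of_add_le_two_mul
    (lintegral_add_le_of_sup_eq_one (F := fun x => a⁻¹ * F x)
    (G := fun x => b⁻¹ * G x) (h := fun x => (√(a * b))⁻¹ * h x) (hF.const_mul _)
    (hG.const_mul _) (hh.const_mul _) (fun x => by have := hF0 x; positivity)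
    (fun x => by have := hG0 x; positivity) (fun x => by have := hh0 x; positivity)
    (fun x => by rw [inv_mul_le_iff₀ ha, mul_one]; exact le_ciSup hFb x)
    (fun x => by rw [inv_mul_le_iff₀ hb, mul_one]; exact le_ciSup hGb x)
    (fun t ht => by
      obtain ⟨x, hx⟩ := exists_lt_of_lt_ciSup (show a * t < a by nlinarith)
      exact ⟨x, by rwa [lt_inv_mul_iff₀ ha]⟩)
    (fun t ht => by
      obtain ⟨x, hx⟩ := exists_lt_of_lt_ciSup (show b * t < b by nlinarith)
      exact ⟨x, by rwa [lt_inv_mul_iff₀ hb]⟩)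
    (fun u v => by
      rw [mul_pow, inv_pow, Real.sq_sqrt (mul_pos ha hb).le, mul_inv]
      calc a⁻¹ * F u * (b⁻¹ * G v) = a⁻¹ * b⁻¹ * (F u * G v) := by ring
        _ ≤ _ := by gcongr; exact H u v))
  have scale : ∀ (c : ℝ) (_ : 0 < c) (φ : ℝ → ℝ), ∫⁻ x, ENNReal.ofReal (φ x) =
      ENNReal.ofReal c * ∫⁻ x, ENNReal.ofReal (c⁻¹ * φ x) := by
    intro c hc φ
    rw [← lintegral_const_mul' _ _ (by simp)]
    refine lintegral_congr fun x => ?_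
    rw [← ENNReal.ofReal_mul hc.le, mul_inv_cancel_left₀ hc.ne']
  rw [scale a ha F, scale b hb G, scale _ hc h, mul_pow, ← ENNReal.ofReal_pow hc.le,
    Real.sq_sqrt (mul_pos ha hb).le, ENNReal.ofReal_mul ha.le, mul_mul_mul_comm]
  gcongr

/-- One-dimensional Prékopa–Leindler inequality. -/
theorem prekopa_leindler {F G : ℝ → ℝ≥0∞} {h : ℝ → ℝ} (hF : Measurable F) (hG : Measurable G)
    (hh : Measurable h) (hh0 : ∀ x, 0 ≤ h x)
    (H : ∀ u v, F u * G v ≤ ENNReal.ofReal (h ((u + v) / 2) ^ 2)) :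
    (∫⁻ x, F x) * ∫⁻ x, G x ≤ (∫⁻ x, ENNReal.ofReal (h x)) ^ 2 := by
  have trunc : ∀ φ : ℝ → ℝ≥0∞, Measurable φ →
      ∫⁻ x, φ x = ⨆ k : ℕ, ∫⁻ x, ENNReal.ofReal (min (φ x) k).toReal := by
    intro φ hφ
    have : ∀ (k : ℕ) x, ENNReal.ofReal (min (φ x) k).toReal = min (φ x) k := fun k x =>
      ENNReal.ofReal_toReal (ne_top_of_le_ne_top (by simp) (min_le_right _ _))
    simp_rw [this]
    rw [← lintegral_iSup (fun k => hφ.min measurable_const)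
      (fun k l hkl x => by dsimp; gcongr)]
    refine lintegral_congr fun x => ?_
    change φ x = ⨆ k : ℕ, φ x ⊓ (k : ℝ≥0∞)
    rw [← inf_iSup_eq, ENNReal.iSup_natCast, inf_top_eq]
  rw [trunc F hF, trunc G hG, ENNReal.iSup_mul]
  refine iSup_le fun k => ?_
  rw [ENNReal.mul_iSup]
  refine iSup_le fun l => ?_
  have bdd : ∀ (φ : ℝ → ℝ≥0∞) (k : ℕ), BddAbove (Set.range fun x => (min (φ x) k).toReal) := by
    rintro φ k
    refine ⟨k, ?_⟩
    rintro _ ⟨x, rfl⟩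
    exact ENNReal.toReal_le_of_le_ofReal (by simp) (by simp)
  refine prekopa_leindler_of_bddAbove (hF.min measurable_const).ennreal_toReal
    (hG.min measurable_const).ennreal_toReal hh (by simp) (by simp) hh0 (bdd F k) (bdd G l)
    fun u v => ?_
  rw [← ENNReal.toReal_mul]
  refine ENNReal.toReal_le_of_le_ofReal (sq_nonneg _) (le_trans ?_ (H u v))
  gcongr <;> exact min_le_left _ _

theorem lintegral_Ioi_eq_lintegral_exp (φ : ℝ → ℝ≥0∞) :
    ∫⁻ s in Set.Ioi 0, φ s = ∫⁻ u, ENNReal.ofReal (Real.exp u) * φ (Real.exp u) := by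
  have := lintegral_image_eq_lintegral_abs_deriv_mul (s := Set.univ) (f := Real.exp)
    (f' := Real.exp) MeasurableSet.univ
    (fun x _ => (Real.hasDerivAt_exp x).hasDerivWithinAt) Real.exp_injective.injOn φ
  simpa [Set.image_univ, Real.range_exp] using this

theorem lintegral_Ioi_exp_neg_sq :
    ∫⁻ s in Set.Ioi (0 : ℝ), ENNReal.ofReal (Real.exp (-s ^ 2 / 2)) =
      ENNReal.ofReal √(Real.pi / 2) := by
  have h1 : ∀ s : ℝ, -s ^ 2 / 2 = -(1 / 2) * s ^ 2 := fun s => by ring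
  simp_rw [h1]
  rw [← ofReal_integral_eq_lintegral_ofReal
    (integrable_exp_neg_mul_sq (by norm_num)).integrableOn
    (.of_forall fun s => (Real.exp_pos _).le), integral_gaussian_Ioi]
  congr 1
  rw [show Real.pi / (1 / 2) = Real.pi / 2 * 2 ^ 2 by ring, Real.sqrt_mul' _ (by positivity),
    Real.sqrt_sq (by norm_num)]
  ring

/-- Santaló inequality on the half-line. -/
theorem lintegral_Ioi_mul_le {f g : ℝ → ℝ≥0∞} (hf : Measurable f) (hg : Measurable g)
    {C : ℝ} (hC : 0 ≤ C)
    (H : ∀ s t, 0 < s → 0 < t → f s * g t ≤ ENNReal.ofReal (C * Real.exp (-(s * t)))) :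
    (∫⁻ s in Set.Ioi 0, f s) * ∫⁻ t in Set.Ioi 0, g t ≤ ENNReal.ofReal (C * (Real.pi / 2)) := by
  let h : ℝ → ℝ := fun w => Real.exp w * (√C * Real.exp (-Real.exp w ^ 2 / 2))
  have hint : ∫⁻ w, ENNReal.ofReal (h w) = ENNReal.ofReal (√C * √(Real.pi / 2)) := by
    rw [ENNReal.ofReal_mul (Real.sqrt_nonneg _), ← lintegral_Ioi_exp_neg_sq,
      ← lintegral_const_mul' _ _ (by simp), lintegral_Ioi_eq_lintegral_exp]
    refine lintegral_congr fun w => ?_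
    rw [ENNReal.ofReal_mul (Real.exp_pos w).le, ENNReal.ofReal_mul (Real.sqrt_nonneg _)]
  have key := prekopa_leindler (F := fun u => ENNReal.ofReal (Real.exp u) * f (Real.exp u))
    (G := fun u => ENNReal.ofReal (Real.exp u) * g (Real.exp u)) (h := h)
    (by fun_prop) (by fun_prop) (by fun_prop) (fun x => by positivity) (fun u v => by
      calc ENNReal.ofReal (Real.exp u) * f (Real.exp u) *
            (ENNReal.ofReal (Real.exp v) * g (Real.exp v))
          = ENNReal.ofReal (Real.exp u * Real.exp v) * (f (Real.exp u) * g (Real.exp v)) := by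
            rw [ENNReal.ofReal_mul (Real.exp_pos u).le, mul_mul_mul_comm]
        _ ≤ ENNReal.ofReal (Real.exp u * Real.exp v) *
            ENNReal.ofReal (C * Real.exp (-(Real.exp u * Real.exp v))) := by
            gcongr
            exact H _ _ (Real.exp_pos u) (Real.exp_pos v)
        _ = ENNReal.ofReal (h ((u + v) / 2) ^ 2) := by
            rw [← ENNReal.ofReal_mul (by positivity)]
            congr 1
            simp only [h, mul_pow, Real.sq_sqrt hC, ← Real.exp_nat_mul, ← Real.exp_add]
            have e : ((2 : ℕ) : ℝ) * ((u + v) / 2) = u + v := by push_cast; ring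
            rw [e]
            congr 3
            push_cast
            ring)
  rw [lintegral_Ioi_eq_lintegral_exp f, lintegral_Ioi_eq_lintegral_exp g]
  refine key.trans_eq ?_
  rw [hint, ← ENNReal.ofReal_pow (by positivity), mul_pow, Real.sq_sqrt hC,
    Real.sq_sqrt (by positivity)]

/-- A measure on `ℝ^n` is centered if its barycenter is the origin. -/
def IsCentered {n : ℕ} (μ : Measure (Fin n → ℝ)) : Prop :=
  ∀ i, Integrable (fun x => x i) μ ∧ ∫ x, x i ∂μ = 0

/-- The functional Santaló inequality on `ℝ^n` for centered densities. -/
def SantaloInequality (n : ℕ) : Prop :=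
  ∀ f g : (Fin n → ℝ) → ℝ≥0∞, Measurable f → Measurable g → ∫⁻ x, f x ≠ ∞ →
    IsCentered (volume.withDensity f) → ∀ C : ℝ, 0 ≤ C →
    (∀ x y, f x * g y ≤ ENNReal.ofReal (C * Real.exp (-(x ⬝ᵥ y)))) →
    (∫⁻ x, f x) * ∫⁻ y, g y ≤ ENNReal.ofReal (C * (2 * Real.pi) ^ n)

theorem lintegral_Ioi_comp_add_mul {ε : ℝ} (hε : ε = 1 ∨ ε = -1) (m : ℝ) {K : ℝ → ℝ≥0∞}
    (hK : Measurable K) :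
    ∫⁻ s in Set.Ioi 0, K (m + ε * s) = ∫⁻ s in {s | 0 < ε * (s - m)}, K s := by
  have hmp : MeasurePreserving (fun s : ℝ => m + ε * s) volume volume := by
    rcases hε with rfl | rfl
    · simpa using measurePreserving_add_left volume m
    · simpa [sub_eq_add_neg] using Measure.measurePreserving_sub_left volume m
  have hS : MeasurableSet {s : ℝ | 0 < ε * (s - m)} :=
    measurableSet_lt measurable_const (by fun_prop)
  rw [← hmp.setLIntegral_comp_preimage hS hK]
  congr 2
  ext s
  rcases hε with rfl | rfl <;> simp

/-- Integrating a density along the direction `(1, v)` on one side of the hyperplane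
`{p | p.1 = m}` is the same as pushing the restricted measure forward along the projection onto
the hyperplane in that direction. -/
theorem withDensity_lintegral_ray {n : ℕ} {f : ℝ × (Fin n → ℝ) → ℝ≥0∞} (hf : Measurable f)
    {ε : ℝ} (hε : ε = 1 ∨ ε = -1) (m : ℝ) (z v : Fin n → ℝ) :
    volume.withDensity
        (fun y => ∫⁻ s in Set.Ioi 0, f (m + ε * s, z + y + (ε * s) • v)) =
      ((volume.withDensity f).restrict {p | 0 < ε * (p.1 - m)}).map
        (fun p => p.2 - z - (p.1 - m) • v) := by
  have hT : Measurable fun p : ℝ × (Fin n → ℝ) => p.2 - z - (p.1 - m) • v := by fun_prop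
  have hS : MeasurableSet {s : ℝ | 0 < ε * (s - m)} :=
    measurableSet_lt measurable_const (by fun_prop)
  have hS' : {p : ℝ × (Fin n → ℝ) | 0 < ε * (p.1 - m)} =
      {s : ℝ | 0 < ε * (s - m)} ×ˢ Set.univ := by ext p; simp
  ext U hU
  set φ : (Fin n → ℝ) → ℝ≥0∞ := U.indicator 1
  have hφm : Measurable φ := measurable_one.indicator hU
  rw [withDensity_apply _ hU, Measure.map_apply hT hU, Measure.restrict_apply (hT hU),
    withDensity_apply _ ((hT hU).inter (by rw [hS']; exact hS.prod .univ)),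
    ← Measure.restrict_restrict (hT hU), hS', ← lintegral_indicator hU,
    ← lintegral_indicator (hT hU)]
  have e1 : ∀ y, U.indicator
      (fun y => ∫⁻ s in Set.Ioi 0, f (m + ε * s, z + y + (ε * s) • v)) y =
      ∫⁻ s in Set.Ioi 0, φ y * f (m + ε * s, z + y + (ε * s) • v) := by
    intro y
    by_cases hy : y ∈ U <;> simp [φ, hy]
  have e2 : ∀ p : ℝ × (Fin n → ℝ),
      ((fun p : ℝ × (Fin n → ℝ) => p.2 - z - (p.1 - m) • v) ⁻¹' U).indicator f p =
      φ (p.2 - z - (p.1 - m) • v) * f p := by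
    intro p
    by_cases hp : p.2 - z - (p.1 - m) • v ∈ U <;> simp [φ, hp]
  simp_rw [e1, e2]
  rw [lintegral_lintegral_swap (by fun_prop), Measure.volume_eq_prod,
    setLIntegral_prod _ (by fun_prop)]
  simp only [Measure.restrict_univ]
  rw [← lintegral_Ioi_comp_add_mul hε m
    (K := fun s => ∫⁻ y, φ (y - z - (s - m) • v) * f (s, y))
    (Measurable.lintegral_prod_right' (f := fun p : ℝ × (Fin n → ℝ) =>
      φ (p.2 - z - (p.1 - m) • v) * f p) (by fun_prop))]
  refine lintegral_congr fun s => ?_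
  conv_rhs => rw [← lintegral_add_left_eq_self _ (z + (ε * s) • v)]
  refine lintegral_congr fun y => ?_
  have a1 : z + (ε * s) • v + y - z - (m + ε * s - m) • v = y := by
    rw [add_sub_cancel_left]; abel
  have a2 : z + (ε * s) • v + y = z + y + (ε * s) • v := by abel
  rw [a1, a2]

/-- Santaló inequality on a half-space, obtained by integrating along rays. -/
theorem measure_halfSpace_mul_le {n : ℕ} (hP : SantaloInequality n)
    {f g : ℝ × (Fin n → ℝ) → ℝ≥0∞} (hf : Measurable f) (hg : Measurable g)
    (hfin : ∫⁻ p, f p ≠ ∞) {ε : ℝ} (hε : ε = 1 ∨ ε = -1) (m : ℝ) (z v : Fin n → ℝ)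
    (hcent : ∀ i, IntegrableOn (fun p : ℝ × (Fin n → ℝ) => p.2 i - z i - (p.1 - m) * v i)
        {p | 0 < ε * (p.1 - m)} (volume.withDensity f) ∧
      ∫ p in {p | 0 < ε * (p.1 - m)}, (p.2 i - z i - (p.1 - m) * v i)
        ∂(volume.withDensity f) = 0)
    {C : ℝ} (hC : 0 ≤ C)
    (H : ∀ s y t y', f (m + s, z + y) * g (t, y') ≤
      ENNReal.ofReal (C * Real.exp (-(s * t + y ⬝ᵥ y')))) :
    volume.withDensity f {p | 0 < ε * (p.1 - m)} *
        ∫⁻ y' : Fin n → ℝ, ∫⁻ t in Set.Ioi 0, g (ε * t - v ⬝ᵥ y', y') ≤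
      ENNReal.ofReal (C * (Real.pi / 2) * (2 * Real.pi) ^ n) := by
  have hT : Measurable fun p : ℝ × (Fin n → ℝ) => p.2 - z - (p.1 - m) • v := by fun_prop
  have hdot : ∀ x : Fin n → ℝ, Measurable fun y' : Fin n → ℝ => x ⬝ᵥ y' := by
    intro x; unfold dotProduct; fun_prop
  have hray := withDensity_lintegral_ray hf hε m z v
  set F : (Fin n → ℝ) → ℝ≥0∞ :=
    fun y => ∫⁻ s in Set.Ioi 0, f (m + ε * s, z + y + (ε * s) • v)
  have hmass : volume.withDensity f {p | 0 < ε * (p.1 - m)} = ∫⁻ y, F y := by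
    have := congrArg (fun μ => μ Set.univ) hray
    simpa [withDensity_apply _ MeasurableSet.univ, Measure.map_apply hT MeasurableSet.univ]
      using this.symm
  have hεsq : ε * ε = 1 := by rcases hε with rfl | rfl <;> norm_num
  rw [hmass]
  refine hP F _ ?_ ?_ ?_ ?_ (C * (Real.pi / 2)) (by positivity) ?_
  · exact Measurable.lintegral_prod_right' (f := fun p : (Fin n → ℝ) × ℝ =>
      f (m + ε * p.2, z + p.1 + (ε * p.2) • v)) (by fun_prop)
  · have : Measurable fun p : (Fin n → ℝ) × ℝ => v ⬝ᵥ p.1 := (hdot v).comp measurable_fst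
    exact Measurable.lintegral_prod_right' (f := fun p : (Fin n → ℝ) × ℝ =>
      g (ε * p.2 - v ⬝ᵥ p.1, p.1))
      (hg.comp (((measurable_snd.const_mul ε).sub this).prodMk measurable_fst))
  · rw [← hmass]
    refine ne_top_of_le_ne_top ?_ (measure_mono (Set.subset_univ _))
    simpa [withDensity_apply _ MeasurableSet.univ] using hfin
  · intro i
    have hm : AEStronglyMeasurable (fun x : Fin n → ℝ => x i) (Measure.map
        (fun p : ℝ × (Fin n → ℝ) => p.2 - z - (p.1 - m) • v)
        ((volume.withDensity f).restrict {p | 0 < ε * (p.1 - m)})) :=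
      (measurable_pi_apply i).aestronglyMeasurable
    rw [hray, integrable_map_measure hm hT.aemeasurable, integral_map hT.aemeasurable hm]
    exact hcent i
  · intro y y'
    have := lintegral_Ioi_mul_le (f := fun s => f (m + ε * s, z + y + (ε * s) • v))
      (g := fun t => g (ε * t - v ⬝ᵥ y', y')) (by fun_prop) (by fun_prop)
      (C := C * Real.exp (-(y ⬝ᵥ y'))) (by positivity) (fun s t _ _ => by
        have h := H (ε * s) (y + (ε * s) • v) (ε * t - v ⬝ᵥ y') y'
        rw [← add_assoc] at h
        refine h.trans_eq ?_
        rw [mul_assoc C, ← Real.exp_add, add_dotProduct, smul_dotProduct, smul_eq_mul]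
        congr 3
        linear_combination (-(s * t)) * hεsq)
    convert this using 2
    ring

theorem exists_median (ν : Measure ℝ) [IsFiniteMeasure ν] [NullSingletonClass ν] :
    ∃ m, ν (Set.Ioi m) = ν (Set.Iio m) := by
  have hc : Continuous fun m => ν.real (Set.Iic m) := by
    have h1 : Continuous fun m => ∫ _ in (0 : ℝ)..m, (1 : ℝ) ∂ν :=
      (integrable_const (1 : ℝ)).continuous_primitive 0
    have h2 : ∀ m, ν.real (Set.Iic m) = (∫ _ in (0 : ℝ)..m, (1 : ℝ) ∂ν) +
        ν.real (Set.Iic 0) := by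
      intro m
      rw [← intervalIntegral.integral_Iic_sub_Iic (integrable_const _).integrableOn
        (integrable_const _).integrableOn]
      simp
    exact (h1.add continuous_const).congr fun m => (h2 m).symm
  have hadd : ∀ m, ν.real (Set.Iic m) + ν.real (Set.Ioi m) = ν.real Set.univ := fun m => by
    rw [← Set.compl_Iic]; exact measureReal_add_measureReal_compl measurableSet_Iic
  have top : Filter.Tendsto (fun m => ν.real (Set.Iic m)) Filter.atTop
      (nhds (ν.real Set.univ)) :=
    (ENNReal.tendsto_toReal (measure_ne_top _ _)).comp (tendsto_measure_Iic_atTop ν)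
  have bot : Filter.Tendsto (fun m => ν.real (Set.Ici m)) Filter.atBot
      (nhds (ν.real Set.univ)) :=
    (ENNReal.tendsto_toReal (measure_ne_top _ _)).comp (tendsto_measure_Ici_atBot ν)
  rcases (measureReal_nonneg (μ := ν) (s := Set.univ)).eq_or_lt with h0 | h0
  · have : ν = 0 := by simpa [Measure.real, ENNReal.toReal_eq_zero_iff] using h0.symm
    exact ⟨0, by simp [this]⟩
  obtain ⟨a, ha⟩ := (bot.eventually (lt_mem_nhds (half_lt_self h0))).exists
  obtain ⟨b, hb⟩ := (top.eventually (lt_mem_nhds (half_lt_self h0))).exists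
  have hIci : ∀ m, ν.real (Set.Ici m) = ν.real (Set.Ioi m) := fun m =>
    measureReal_congr Ioi_ae_eq_Ici.symm
  obtain ⟨m, hm⟩ := mem_range_of_exists_le_of_exists_ge hc
    (c := ν.real Set.univ / 2) ⟨a, by have := hadd a; rw [hIci] at ha; linarith⟩ ⟨b, hb.le⟩
  refine ⟨m, ?_⟩
  rw [measure_congr (Iio_ae_eq_Iic (μ := ν) (a := m))]
  refine (ENNReal.toReal_eq_toReal_iff' (measure_ne_top _ _) (measure_ne_top _ _)).1 ?_
  have := hadd m
  dsimp only at hm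
  change ν.real _ = ν.real _
  linarith

theorem lintegral_eq_lintegral_shear {n : ℕ} {g : ℝ × (Fin n → ℝ) → ℝ≥0∞} (hg : Measurable g)
    (v : Fin n → ℝ) :
    ∫⁻ p, g p = (∫⁻ y' : Fin n → ℝ, ∫⁻ t in Set.Ioi 0, g (1 * t - v ⬝ᵥ y', y')) +
      ∫⁻ y' : Fin n → ℝ, ∫⁻ t in Set.Ioi 0, g (-1 * t - v ⬝ᵥ y', y') := by
  have hdot : Measurable fun p : (Fin n → ℝ) × ℝ => v ⬝ᵥ p.1 := by
    unfold dotProduct; fun_prop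
  rw [← lintegral_add_left (Measurable.lintegral_prod_right' (f := fun p : (Fin n → ℝ) × ℝ =>
      g (1 * p.2 - v ⬝ᵥ p.1, p.1))
      (hg.comp (((measurable_snd.const_mul 1).sub hdot).prodMk measurable_fst))),
    Measure.volume_eq_prod, lintegral_prod_symm _ hg.aemeasurable]
  refine lintegral_congr fun y' => ?_
  have h := fun ε hε => lintegral_Ioi_comp_add_mul (ε := ε) hε 0
    (K := fun t => g (t - v ⬝ᵥ y', y')) (by fun_prop)
  have h1 := h 1 (.inl rfl)
  have h2 := h (-1) (.inr rfl)
  simp only [zero_add, sub_zero] at h1 h2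
  rw [h1, h2, ← lintegral_sub_right_eq_self _ (v ⬝ᵥ y'),
    ← lintegral_add_compl _ (measurableSet_Ioi (a := (0 : ℝ)))]
  congr 1
  · simp [Set.Ioi_def]
  · refine setLIntegral_congr ?_
    rw [Set.compl_Ioi]
    refine Iio_ae_eq_Iic.symm.trans (Filter.EventuallyEq.of_eq ?_)
    change Set.Iio 0 = {t : ℝ | 0 < -1 * t}
    ext t
    simp

theorem volume_fst_preimage_singleton {n : ℕ} (a : ℝ) :
    volume ((Prod.fst : ℝ × (Fin n → ℝ) → ℝ) ⁻¹' {a}) = 0 := by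
  rw [← Set.prod_univ, Measure.volume_eq_prod, Measure.prod_prod]
  simp

/-- Existence of a Santaló point, lying on a median hyperplane. -/
theorem exists_santalo_point {n : ℕ} (hP : SantaloInequality n)
    {f : ℝ × (Fin n → ℝ) → ℝ≥0∞} (hf : Measurable f) (hfin : ∫⁻ p, f p ≠ ∞)
    (hi1 : Integrable (fun p : ℝ × (Fin n → ℝ) => p.1) (volume.withDensity f))
    (hi2 : ∀ i, Integrable (fun p : ℝ × (Fin n → ℝ) => p.2 i) (volume.withDensity f)) :
    ∃ (m : ℝ) (z : Fin n → ℝ), ∀ g : ℝ × (Fin n → ℝ) → ℝ≥0∞, Measurable g →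
      ∀ C : ℝ, 0 ≤ C →
      (∀ s y t y', f (m + s, z + y) * g (t, y') ≤
        ENNReal.ofReal (C * Real.exp (-(s * t + y ⬝ᵥ y')))) →
      (∫⁻ p, f p) * ∫⁻ p, g p ≤ ENNReal.ofReal (C * (2 * Real.pi) ^ (n + 1)) := by
  have huniv : volume.withDensity f Set.univ = ∫⁻ p, f p := by
    simp [withDensity_apply _ MeasurableSet.univ]
  have hac : volume.withDensity f ≪ volume := withDensity_absolutelyContinuous _ _
  set μ := volume.withDensity f
  have : IsFiniteMeasure μ := ⟨by rw [huniv]; exact hfin.lt_top⟩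
  rcases eq_or_ne (μ Set.univ) 0 with h0 | h0
  · exact ⟨0, 0, fun g _ C _ _ => by simp [← huniv, h0]⟩
  have : NullSingletonClass (μ.map Prod.fst) := ⟨fun a => by
    rw [Measure.map_apply measurable_fst (measurableSet_singleton a)]
    exact hac (volume_fst_preimage_singleton a)⟩
  obtain ⟨m, hm⟩ := exists_median (μ.map Prod.fst)
  rw [Measure.map_apply measurable_fst measurableSet_Ioi,
    Measure.map_apply measurable_fst measurableSet_Iio] at hm
  let S : ℝ → Set (ℝ × (Fin n → ℝ)) := fun ε => {p | 0 < ε * (p.1 - m)}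
  have hS1 : S 1 = Prod.fst ⁻¹' Set.Ioi m := by ext p; simp [S]
  have hS2 : S (-1) = Prod.fst ⁻¹' Set.Iio m := by ext p; simp [S]
  have hSm : ∀ ε, MeasurableSet (S ε) := fun ε =>
    measurableSet_lt measurable_const (by fun_prop)
  rw [← hS1, ← hS2] at hm
  have hsum : μ Set.univ = 2 * μ (S 1) := by
    have hc : μ (S 1)ᶜ = μ (S (-1)) := by
      refine le_antisymm ?_ (measure_mono ?_)
      · calc μ (S 1)ᶜ ≤ μ (S (-1) ∪ Prod.fst ⁻¹' {m}) := measure_mono (by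
              intro p hp
              simp only [hS1, hS2, Set.mem_compl_iff, Set.mem_preimage, Set.mem_Ioi, not_lt,
                Set.mem_union, Set.mem_Iio, Set.mem_singleton_iff] at hp ⊢
              exact hp.lt_or_eq)
          _ ≤ μ (S (-1)) + μ (Prod.fst ⁻¹' {m}) := measure_union_le _ _
          _ = μ (S (-1)) := by rw [hac (volume_fst_preimage_singleton m), add_zero]
      · intro p hp
        simp only [hS1, hS2, Set.mem_compl_iff, Set.mem_preimage, Set.mem_Ioi, not_lt,
          Set.mem_Iio] at hp ⊢
        exact hp.le
    rw [← measure_add_measure_compl (hSm 1), hc, ← hm, two_mul]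
  have hSpos : μ (S 1) ≠ 0 := fun h => h0 (by rw [hsum, h, mul_zero])
  have hMpos : 0 < μ.real (S 1) := ENNReal.toReal_pos hSpos (measure_ne_top _ _)
  have hMeq : μ.real (S (-1)) = μ.real (S 1) := by simp only [Measure.real, hm]
  have hi1' : Integrable (fun p : ℝ × (Fin n → ℝ) => p.1 - m) μ := hi1.sub (integrable_const m)
  let σ : ℝ → ℝ := fun ε => ∫ p in S ε, (p.1 - m) ∂μ
  let Y : ℝ → Fin n → ℝ := fun ε i => ∫ p in S ε, p.2 i ∂μ
  have hσ1 : 0 < σ 1 := by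
    refine (setIntegral_pos_iff_support_of_nonneg_ae ?_ hi1'.integrableOn).2 ?_
    · refine (ae_restrict_mem (hSm 1)).mono fun p hp => ?_
      have : 0 < 1 * (p.1 - m) := hp
      simpa using this.le
    · refine (pos_iff_ne_zero.2 hSpos).trans_le (measure_mono fun p hp => ⟨?_, hp⟩)
      have : 0 < 1 * (p.1 - m) := hp
      rw [one_mul] at this
      exact this.ne'
  have hσ2 : σ (-1) ≤ 0 := setIntegral_nonpos (hSm _) fun p hp => by
    have : 0 < -1 * (p.1 - m) := hp
    linarith
  have hσ : σ 1 - σ (-1) ≠ 0 := by linarith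
  let v : Fin n → ℝ := fun i => (Y 1 i - Y (-1) i) / (σ 1 - σ (-1))
  let z : Fin n → ℝ := fun i => (Y 1 i - σ 1 * v i) / μ.real (S 1)
  have hv : ∀ i, v i * (σ 1 - σ (-1)) = Y 1 i - Y (-1) i := fun i => div_mul_cancel₀ _ hσ
  have hz : ∀ i, z i * μ.real (S 1) = Y 1 i - σ 1 * v i := fun i =>
    div_mul_cancel₀ _ hMpos.ne'
  have hint : ∀ ε i, IntegrableOn
      (fun p : ℝ × (Fin n → ℝ) => p.2 i - z i - (p.1 - m) * v i) (S ε) μ := fun ε i =>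
    (((hi2 i).sub (integrable_const _)).sub (hi1'.mul_const _)).integrableOn
  have hval : ∀ ε i, ∫ p in S ε, (p.2 i - z i - (p.1 - m) * v i) ∂μ =
      Y ε i - z i * μ.real (S ε) - σ ε * v i := by
    intro ε i
    have hi : Integrable (fun p : ℝ × (Fin n → ℝ) => p.2 i - z i) μ :=
      (hi2 i).sub (integrable_const _)
    rw [integral_sub hi.integrableOn (hi1'.mul_const _).integrableOn,
      integral_sub (hi2 i).integrableOn (integrable_const _), integral_mul_const]
    simp [Y, σ, mul_comm]
  refine ⟨m, z, fun g hg C hC H => ?_⟩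
  have b1 := measure_halfSpace_mul_le hP hf hg hfin (ε := 1) (.inl rfl) m z v (fun i => ⟨hint 1 i, by
    rw [hval 1 i]; linear_combination -(hz i)⟩) hC H
  have b2 := measure_halfSpace_mul_le hP hf hg hfin (ε := -1) (.inr rfl) m z v (fun i => ⟨hint (-1) i, by
    rw [hval (-1) i, hMeq]; linear_combination hv i - hz i⟩) hC H
  change μ (S 1) * _ ≤ _ at b1
  change μ (S (-1)) * _ ≤ _ at b2
  rw [← hm] at b2
  rw [← huniv, hsum, lintegral_eq_lintegral_shear hg v, mul_assoc, mul_add]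
  refine (mul_le_mul_right (add_le_add b1 b2) 2).trans_eq ?_
  rw [← ENNReal.ofReal_add (by positivity) (by positivity),
    ← ENNReal.ofReal_ofNat 2, ← ENNReal.ofReal_mul (by norm_num)]
  congr 1
  ring

theorem measure_univ_le_lintegral_exp {α : Type*} [MeasurableSpace α] (ν : Measure α)
    [IsFiniteMeasure ν] {ℓ : α → ℝ} (hℓ : Integrable ℓ ν) (h0 : ∫ x, ℓ x ∂ν = 0) :
    ν Set.univ ≤ ∫⁻ x, ENNReal.ofReal (Real.exp (ℓ x)) ∂ν := by
  have hi : Integrable (fun x => 1 + ℓ x) ν := (integrable_const 1).add hℓ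
  have hval : ∫ x, (1 + ℓ x) ∂ν = ν.real Set.univ := by
    rw [integral_add (integrable_const 1) hℓ, h0]
    simp
  calc ν Set.univ = ENNReal.ofReal (∫ x, (1 + ℓ x) ∂ν) := by
        rw [hval, ofReal_measureReal]
    _ ≤ ENNReal.ofReal (∫ x, max (1 + ℓ x) 0 ∂ν) :=
        ENNReal.ofReal_le_ofReal (integral_mono hi hi.pos_part fun x => le_max_left _ _)
    _ = ∫⁻ x, ENNReal.ofReal (max (1 + ℓ x) 0) ∂ν :=
        ofReal_integral_eq_lintegral_ofReal hi.pos_part (.of_forall fun x => le_max_right _ _)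
    _ ≤ ∫⁻ x, ENNReal.ofReal (Real.exp (ℓ x)) ∂ν := by
        refine lintegral_mono fun x => ENNReal.ofReal_le_ofReal (max_le ?_ (Real.exp_pos _).le)
        linarith [Real.add_one_le_exp (ℓ x)]

theorem measurePreserving_finCons (n : ℕ) :
    MeasurePreserving (fun p : ℝ × (Fin n → ℝ) => (Fin.cons p.1 p.2 : Fin (n + 1) → ℝ)) := by
  have h := (volume_preserving_piFinSuccAbove (fun _ : Fin (n + 1) => ℝ) 0).symm
  convert! h using 1
  ext p : 1
  exact (Fin.insertNth_zero (α := fun _ => ℝ) p.1 p.2).symm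

theorem santaloInequality_zero : SantaloInequality 0 := by
  intro f g _ _ _ _ C _ H
  have hvol : (volume : Measure (Fin 0 → ℝ)) Set.univ = 1 := by
    rw [volume_pi, Measure.pi_of_empty]
    simp
  rw [lintegral_unique, lintegral_unique, hvol, mul_one, mul_one, pow_zero, mul_one]
  refine (H _ _).trans_eq ?_
  simp [dotProduct]

/-- Truncation of a function in both value and argument. -/
noncomputable def truncate {E : Type*} [SeminormedAddCommGroup E] (g : E → ℝ≥0∞) (k : ℕ) :
    E → ℝ≥0∞ :=
  (Metric.closedBall 0 k).indicator fun x => min (g x) k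

section truncate

variable {E : Type*} [SeminormedAddCommGroup E] (g : E → ℝ≥0∞)

theorem truncate_le (k : ℕ) (x : E) : truncate g k x ≤ g x :=
  (Set.indicator_le_self _ _ x).trans (min_le_left _ _)

theorem norm_le_of_truncate_ne_zero {k : ℕ} {x : E} (h : truncate g k x ≠ 0) : ‖x‖ ≤ k := by
  simpa using Set.mem_of_indicator_ne_zero h

theorem monotone_truncate : Monotone (truncate g) := by
  intro k l hkl x
  refine (Set.indicator_le_indicator (g := fun x => min (g x) l) ?_).trans
    (Set.indicator_le_indicator_of_subset
      (Metric.closedBall_subset_closedBall (Nat.cast_le.2 hkl)) (fun _ => zero_le) x)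
  gcongr

theorem iSup_truncate (x : E) : ⨆ k, truncate g k x = g x := by
  refine le_antisymm (iSup_le fun k => truncate_le g k x) ?_
  obtain ⟨k₀, hk₀⟩ := exists_nat_ge ‖x‖
  calc g x = ⨆ k : ℕ, g x ⊓ (k : ℝ≥0∞) := by
        rw [← inf_iSup_eq, ENNReal.iSup_natCast, inf_top_eq]
    _ ≤ ⨆ k, truncate g k x := iSup_le fun k => le_iSup_of_le (max k k₀) ?_
  have hx : x ∈ Metric.closedBall (0 : E) (max k k₀ : ℕ) := by
    simpa using Or.inr hk₀
  rw [truncate, Set.indicator_of_mem hx]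
  exact inf_le_inf_left _ (by exact_mod_cast le_max_left k k₀)

variable [MeasurableSpace E] [OpensMeasurableSpace E] {g}

theorem measurable_truncate (hg : Measurable g) (k : ℕ) : Measurable (truncate g k) :=
  (hg.min measurable_const).indicator Metric.isClosed_closedBall.measurableSet

theorem lintegral_truncate_ne_top [ProperSpace E] (μ : Measure E) [IsFiniteMeasureOnCompacts μ]
    (k : ℕ) : ∫⁻ x, truncate g k x ∂μ ≠ ∞ := by
  refine ne_top_of_le_ne_top ?_ (lintegral_mono (g := (Metric.closedBall (0 : E) k).indicator
    fun _ => (k : ℝ≥0∞)) fun x => Set.indicator_le_indicator (min_le_right _ _))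
  rw [lintegral_indicator Metric.isClosed_closedBall.measurableSet, setLIntegral_const]
  exact ENNReal.mul_ne_top (by simp) (isCompact_closedBall _ _).measure_ne_top

theorem integrable_withDensity_truncate [ProperSpace E] (μ : Measure E)
    [IsFiniteMeasureOnCompacts μ] (hg : Measurable g) (k : ℕ) {φ : E → ℝ} (hφ : Measurable φ)
    (hle : ∀ x, |φ x| ≤ ‖x‖) : Integrable φ (μ.withDensity (truncate g k)) := by
  have : IsFiniteMeasure (μ.withDensity (truncate g k)) :=
    isFiniteMeasure_withDensity (lintegral_truncate_ne_top μ k)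
  refine Integrable.of_bound hφ.aestronglyMeasurable k ?_
  rw [ae_withDensity_iff (measurable_truncate hg k)]
  exact .of_forall fun x hx => (hle x).trans (norm_le_of_truncate_ne_zero g hx)

end truncate

theorem santaloInequality_succ {n : ℕ} (hP : SantaloInequality n) :
    SantaloInequality (n + 1) := by
  intro f g hf hg hfin hcent C hC H
  set c : ℝ × (Fin n → ℝ) → Fin (n + 1) → ℝ := fun p => Fin.cons p.1 p.2
  have hmp : MeasurePreserving c := measurePreserving_finCons n
  have hdot : ∀ s y t y', c (s, y) ⬝ᵥ c (t, y') = s * t + y ⬝ᵥ y' := fun s y t y' => by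
    simp [c, dotProduct, Fin.sum_univ_succ]
  have hgc : Measurable (g ∘ c) := hg.comp hmp.measurable
  have hbound : ∀ k, (∫⁻ x, f x) * ∫⁻ p, truncate (g ∘ c) k p ≤
      ENNReal.ofReal (C * (2 * Real.pi) ^ (n + 1)) := by
    intro k
    obtain ⟨m, z, hmz⟩ := exists_santalo_point hP (measurable_truncate hgc k)
      (lintegral_truncate_ne_top volume k)
      (integrable_withDensity_truncate volume hgc k measurable_fst fun p => norm_fst_le p)
      (fun i => integrable_withDensity_truncate volume hgc k (by fun_prop) fun p =>
        (norm_le_pi_norm p.2 i).trans (norm_snd_le p))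
    set w := c (m, z) with hw
    have hwm : Measurable fun x : Fin (n + 1) → ℝ => ENNReal.ofReal (Real.exp (w ⬝ᵥ x)) := by
      unfold dotProduct; fun_prop
    have hFm : Measurable fun x => f x * ENNReal.ofReal (Real.exp (w ⬝ᵥ x)) := hf.mul hwm
    have h1 := hmz (fun p => f (c p) * ENNReal.ofReal (Real.exp (w ⬝ᵥ c p)))
      (hFm.comp hmp.measurable) C hC (fun s y t y' => by
        calc truncate (g ∘ c) k (m + s, z + y) *
              (f (c (t, y')) * ENNReal.ofReal (Real.exp (w ⬝ᵥ c (t, y'))))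
            ≤ g (c (m + s, z + y)) *
              (f (c (t, y')) * ENNReal.ofReal (Real.exp (w ⬝ᵥ c (t, y')))) := by
              gcongr
              exact truncate_le _ _ _
          _ = f (c (t, y')) * g (c (m + s, z + y)) *
              ENNReal.ofReal (Real.exp (w ⬝ᵥ c (t, y'))) := by ring
          _ ≤ ENNReal.ofReal (C * Real.exp (-(c (t, y') ⬝ᵥ c (m + s, z + y)))) *
              ENNReal.ofReal (Real.exp (w ⬝ᵥ c (t, y'))) := by
              gcongr
              exact H _ _
          _ = ENNReal.ofReal (C * Real.exp (-(s * t + y ⬝ᵥ y'))) := by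
              rw [← ENNReal.ofReal_mul (by positivity), mul_assoc, ← Real.exp_add, hw, hdot,
                hdot, dotProduct_add, dotProduct_comm y' z, dotProduct_comm y' y]
              congr 3
              ring)
    rw [mul_comm]
    refine le_trans ?_ h1
    gcongr
    rw [hmp.lintegral_comp hFm]
    have : IsFiniteMeasure (volume.withDensity f) := isFiniteMeasure_withDensity hfin
    have hle := measure_univ_le_lintegral_exp (volume.withDensity f) (ℓ := fun x => w ⬝ᵥ x)
      (integrable_finsetSum _ fun i _ => (hcent i).1.const_mul (w i)) (by
        simp only [dotProduct]
        rw [integral_finsetSum _ fun i _ => (hcent i).1.const_mul (w i)]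
        simp [integral_const_mul, (hcent _).2])
    rw [lintegral_withDensity_eq_lintegral_mul _ hf hwm,
      withDensity_apply _ MeasurableSet.univ, Measure.restrict_univ] at hle
    exact hle
  rw [← hmp.lintegral_comp hg]
  have hsup : ∫⁻ p, g (c p) = ⨆ k, ∫⁻ p, truncate (g ∘ c) k p := by
    rw [← lintegral_iSup (measurable_truncate hgc) (monotone_truncate _)]
    exact lintegral_congr fun p => (iSup_truncate (g ∘ c) p).symm
  rw [hsup, ENNReal.mul_iSup]
  exact iSup_le hbound

theorem santaloInequality (n : ℕ) : SantaloInequality n := by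
  induction n with
  | zero => exact santaloInequality_zero
  | succ n ih => exact santaloInequality_succ ih

section Gaussian

variable {V : Type*} [NormedAddCommGroup V] [InnerProductSpace ℝ V] [FiniteDimensional ℝ V]
  [MeasurableSpace V] [BorelSpace V]

theorem integrable_exp_neg_mul_sq_norm {b : ℝ} (hb : 0 < b) :
    Integrable fun x : V => Real.exp (-b * ‖x‖ ^ 2) := by
  refine Integrable.of_integral_ne_zero ?_
  rw [GaussianFourier.integral_rexp_neg_mul_sq_norm hb]
  positivity

theorem integrable_exp_neg_sq_norm_smul :
    Integrable fun x : V => Real.exp (-‖x‖ ^ 2 / 2) • x := by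
  refine (integrable_exp_neg_mul_sq_norm (V := V) (b := 1 / 4) (by norm_num)).mono'
    (by fun_prop) (.of_forall fun x => ?_)
  rw [norm_smul, Real.norm_of_nonneg (Real.exp_pos _).le]
  have h1 : ‖x‖ ≤ Real.exp (1 / 4 * ‖x‖ ^ 2) := by
    nlinarith [Real.add_one_le_exp (1 / 4 * ‖x‖ ^ 2), sq_nonneg (1 - ‖x‖ / 2)]
  calc Real.exp (-‖x‖ ^ 2 / 2) * ‖x‖
      ≤ Real.exp (-‖x‖ ^ 2 / 2) * Real.exp (1 / 4 * ‖x‖ ^ 2) := by gcongr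
    _ = Real.exp (-(1 / 4) * ‖x‖ ^ 2) := by rw [← Real.exp_add]; congr 1; ring

end Gaussian

theorem stdGaussian_univ (d : ℕ) : stdGaussian d Set.univ = 1 := by
  have hi : Integrable fun x : EuclideanSpace ℝ (Fin d) =>
      (2 * Real.pi) ^ (-(d : ℝ) / 2) * Real.exp (-(1 / 2) * ‖x‖ ^ 2) :=
    (integrable_exp_neg_mul_sq_norm (by norm_num)).const_mul _
  have h1 : ∀ x : EuclideanSpace ℝ (Fin d), -‖x‖ ^ 2 / 2 = -(1 / 2) * ‖x‖ ^ 2 :=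
    fun x => by ring
  simp_rw [stdGaussian, withDensity_apply _ MeasurableSet.univ, Measure.restrict_univ, h1]
  rw [← ofReal_integral_eq_lintegral_ofReal hi (.of_forall fun x => by positivity),
    integral_const_mul, GaussianFourier.integral_rexp_neg_mul_sq_norm (by norm_num),
    finrank_euclideanSpace_fin, show Real.pi / (1 / 2) = 2 * Real.pi by ring,
    ← Real.rpow_add (by positivity), neg_div, neg_add_cancel, Real.rpow_zero,
    ENNReal.ofReal_one]

theorem integrable_id_stdGaussian (d : ℕ) : Integrable (fun x => x) (stdGaussian d) := by
  rw [stdGaussian, integrable_withDensity_iff_integrable_smul' (by fun_prop) (by simp)]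
  refine (integrable_exp_neg_sq_norm_smul.smul ((2 * Real.pi) ^ (-(d : ℝ) / 2))).congr
    (.of_forall fun x => ?_)
  dsimp only [Pi.smul_apply]
  rw [ENNReal.toReal_ofReal (by positivity), smul_smul]

/-- The product form of Gaussian concentration: sets at distance at least `r` from each other,
one of which is centered. -/
theorem stdGaussian_mul_le (d : ℕ) {A B : Set (EuclideanSpace ℝ (Fin d))}
    (hA : MeasurableSet A) (hB : MeasurableSet B) (hbar : ∫ x in A, x ∂(stdGaussian d) = 0)
    {r : ℝ} (hr : 0 ≤ r) (hAB : ∀ x ∈ A, ∀ y ∈ B, r ≤ dist x y) :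
    stdGaussian d A * stdGaussian d B ≤ ENNReal.ofReal (Real.exp (-r ^ 2 / 2)) := by
  set κ : ℝ := (2 * Real.pi) ^ (-(d : ℝ) / 2) with hκ
  have hκ0 : 0 ≤ κ := by positivity
  set ρ : EuclideanSpace ℝ (Fin d) → ℝ≥0∞ :=
    fun x => ENNReal.ofReal (κ * Real.exp (-‖x‖ ^ 2 / 2))
  have hρm : Measurable ρ := by fun_prop
  have hmp := PiLp.volume_preserving_toLp (Fin d)
  have hemb : MeasurableEmbedding (WithLp.toLp 2 : (Fin d → ℝ) → EuclideanSpace ℝ (Fin d)) :=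
    (MeasurableEquiv.toLp 2 (Fin d → ℝ)).measurableEmbedding
  have hdens : ∀ S : Set (EuclideanSpace ℝ (Fin d)), MeasurableSet S →
      (volume.withDensity fun x => S.indicator ρ (WithLp.toLp 2 x)).map (WithLp.toLp 2) =
        (stdGaussian d).restrict S := by
    intro S hS
    rw [stdGaussian, restrict_withDensity hS, ← withDensity_indicator hS]
    ext U hU
    rw [Measure.map_apply hmp.measurable hU, withDensity_apply _ (hmp.measurable hU),
      withDensity_apply _ hU]
    exact hmp.setLIntegral_comp_preimage_emb hemb _ _
  have hmass : ∀ S : Set (EuclideanSpace ℝ (Fin d)), MeasurableSet S →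
      ∫⁻ x, S.indicator ρ (WithLp.toLp 2 x) = stdGaussian d S := by
    intro S hS
    rw [hmp.lintegral_comp (hρm.indicator hS), lintegral_indicator hS, stdGaussian,
      withDensity_apply _ hS]
  have : IsFiniteMeasure (stdGaussian d) := ⟨by rw [stdGaussian_univ]; exact one_lt_top⟩
  have hint : Integrable (fun x => x) ((stdGaussian d).restrict A) :=
    (integrable_id_stdGaussian d).integrableOn
  have hcent : IsCentered
      (volume.withDensity fun x => A.indicator ρ (WithLp.toLp 2 x)) := by
    intro i
    let L : EuclideanSpace ℝ (Fin d) →L[ℝ] ℝ := EuclideanSpace.proj i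
    have hLm : AEStronglyMeasurable L ((volume.withDensity fun x =>
        A.indicator ρ (WithLp.toLp 2 x)).map (WithLp.toLp 2)) :=
      L.continuous.aestronglyMeasurable
    refine ⟨(integrable_map_measure hLm hmp.measurable.aemeasurable).1 ?_,
      (integral_map hmp.measurable.aemeasurable hLm).symm.trans ?_⟩
    · rw [hdens A hA]
      exact L.integrable_comp hint
    · rw [hdens A hA, L.integral_comp_comm hint, hbar, map_zero]
  have key := santaloInequality d (fun x => A.indicator ρ (WithLp.toLp 2 x))
    (fun x => B.indicator ρ (WithLp.toLp 2 x)) ((hρm.indicator hA).comp hmp.measurable)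
    ((hρm.indicator hB).comp hmp.measurable) (by rw [hmass A hA]; exact measure_ne_top _ _)
    hcent (κ ^ 2 * Real.exp (-r ^ 2 / 2)) (by positivity) (fun x y => by
      by_cases hx : WithLp.toLp 2 x ∈ A
      swap
      · simp [hx]
      by_cases hy : WithLp.toLp 2 y ∈ B
      swap
      · simp [hy]
      rw [Set.indicator_of_mem hx, Set.indicator_of_mem hy, ← ENNReal.ofReal_mul (by positivity)]
      refine ENNReal.ofReal_le_ofReal ?_
      have hdist := hAB _ hx _ hy
      rw [dist_eq_norm] at hdist
      have hsq := norm_sub_sq_real (WithLp.toLp 2 x : EuclideanSpace ℝ (Fin d)) (WithLp.toLp 2 y)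
      have hin : inner ℝ (WithLp.toLp 2 x : EuclideanSpace ℝ (Fin d)) (WithLp.toLp 2 y) = x ⬝ᵥ y := by
        simp [PiLp.inner_apply, dotProduct, mul_comm]
      rw [hin] at hsq
      have hr2 : r ^ 2 ≤ ‖(WithLp.toLp 2 x : EuclideanSpace ℝ (Fin d)) - WithLp.toLp 2 y‖ ^ 2 := by
        gcongr
      rw [mul_mul_mul_comm, ← sq, mul_assoc, ← Real.exp_add, ← Real.exp_add]
      refine mul_le_mul_of_nonneg_left (Real.exp_le_exp.2 ?_) (sq_nonneg κ)
      linarith)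
  rw [hmass A hA, hmass B hB] at key
  refine key.trans_eq ?_
  have hκd : κ ^ 2 * (2 * Real.pi) ^ d = 1 := by
    rw [hκ, ← Real.rpow_natCast, ← Real.rpow_mul (by positivity), ← Real.rpow_natCast,
      ← Real.rpow_add (by positivity)]
    convert Real.rpow_zero _ using 2
    push_cast
    ring
  congr 1
  linear_combination Real.exp (-r ^ 2 / 2) * hκd

/-- **Gaussian concentration for sets with barycenter at the origin** (Theorem 4.1): if
`γ(A) > 0` and `∫_A x dγ = 0`, then the `r`-enlargement `A_r` of `A` satisfies
`1 - γ(A_r) ≤ γ(A)⁻¹ e^{-r²/2}`. -/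
theorem gaussian_concentration_centered (d : ℕ) (hd : 1 ≤ d)
    (A : Set (EuclideanSpace ℝ (Fin d))) (hA : MeasurableSet A)
    (hApos : 0 < stdGaussian d A) (hbar : ∫ x in A, x ∂(stdGaussian d) = 0)
    (r : ℝ) (hr : 0 < r) :
    1 - stdGaussian d {x | Metric.infDist x A ≤ r} ≤
      (stdGaussian d A)⁻¹ * ENNReal.ofReal (Real.exp (-r ^ 2 / 2)) := by
  have hE : MeasurableSet {x | Metric.infDist x A ≤ r} :=
    measurableSet_le measurable_infDist measurable_const
  have hmul := stdGaussian_mul_le d hA hE.compl hbar hr.le fun x hx y hy => by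
    rw [dist_comm]
    have hy' : ¬Metric.infDist y A ≤ r := hy
    exact (not_le.1 hy').le.trans (Metric.infDist_le_dist_of_mem hx)
  have hAtop : stdGaussian d A ≠ ∞ :=
    ne_top_of_le_ne_top one_ne_top
      ((measure_mono (Set.subset_univ A)).trans_eq (stdGaussian_univ d))
  calc 1 - stdGaussian d {x | Metric.infDist x A ≤ r}
      ≤ stdGaussian d {x | Metric.infDist x A ≤ r}ᶜ := by
        rw [tsub_le_iff_left, measure_add_measure_compl hE, stdGaussian_univ]
    _ ≤ (stdGaussian d A)⁻¹ * ENNReal.ofReal (Real.exp (-r ^ 2 / 2)) :=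
        (ENNReal.mul_le_iff_le_inv hApos.ne' hAtop).1 hmul
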